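/- Error bound for the exact Newton step with an approximate Hessian (bound on Term 1 of inequality (4.9)). Let F : ℝ^d → ℝ be twice continuously differentiable with M-Lipschitz Hessian and with ∇F(w*) = 0. Let A be a symmetric matrix with A ⪰ μ·I for some μ > 0 (hence invertible). Then for every w ∈ ℝ^d, ‖w − w* − A^{-1}∇F(w)‖ ≤ (M/(2μ))·‖w − w*‖² + (1/μ)·‖(A − ∇²F(w))(w − w*)‖. -/

import Mathlib

open Matrix

/-- Matrix–vector multiplication, viewed on Euclidean space. -/
noncomputable def matVec {d : ℕ} (A : Matrix (Fin d) (Fin d) ℝ) (v : EuclideanSpace ℝ (Fin d)) :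
    EuclideanSpace ℝ (Fin d) := Matrix.toEuclideanCLM (𝕜 := ℝ) A v

/-!
Since `A` maps the Newton step to `∇F(w)` and `∇F(w*) = 0`,
`A (w - w* - A⁻¹ ∇F(w)) = (A - ∇²F(w)) (w - w*) + r`, where
`r = ∇F(w*) - ∇F(w) - ∇²F(w) (w* - w)` is the first-order Taylor remainder of `∇F` at `w`.
The Lipschitz bound on the Hessian gives `‖r‖ ≤ M / 2 * ‖w - w*‖ ^ 2`, and `A ⪰ μ I` gives
`μ * ‖x‖ ≤ ‖A x‖`.
-/

section Taylor

variable {E G : Type*} [NormedAddCommGroup E] [NormedSpace ℝ E]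
  [NormedAddCommGroup G] [NormedSpace ℝ G]

theorem norm_image_sub_le_of_norm_deriv_le_mul_sub {f f' : ℝ → G} {C a b : ℝ} (hab : a ≤ b)
    (hf : ∀ t ∈ Set.Icc a b, HasDerivWithinAt f (f' t) (Set.Icc a b) t)
    (bound : ∀ t ∈ Set.Ico a b, ‖f' t‖ ≤ C * (t - a)) :
    ‖f b - f a‖ ≤ C / 2 * (b - a) ^ 2 := by
  have hasDerivAt_majorant (t : ℝ) :
      HasDerivAt (fun t ↦ C / 2 * (t - a) ^ 2) (C * (t - a)) t := by
    refine ((((hasDerivAt_id t).sub_const a).pow 2).const_mul (C / 2)).congr_deriv ?_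
    simp only [id_eq]
    ring
  refine image_norm_le_of_norm_deriv_right_le_deriv_boundary (f := fun t ↦ f t - f a)
    (fun t ht ↦ ((hf t ht).sub_const (f a)).continuousWithinAt) (fun t ht ↦ ?_)
    (by simp) hasDerivAt_majorant bound (Set.right_mem_Icc.2 hab)
  exact ((hf t (Set.Ico_subset_Icc_self ht)).sub_const (f a)).mono_of_mem_nhdsWithin
    (Icc_mem_nhdsGE_of_mem ht)

theorem norm_image_sub_sub_hasFDerivWithin_le {f : E → G} {f' : E → E →L[ℝ] G}
    {s : Set E} {M : ℝ} {x y : E} (hs : Convex ℝ s)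
    (hf : ∀ z ∈ s, HasFDerivWithinAt f (f' z) s z)
    (hlip : ∀ z ∈ s, ‖f' z - f' x‖ ≤ M * ‖z - x‖) (hx : x ∈ s) (hy : y ∈ s) :
    ‖f y - f x - f' x (y - x)‖ ≤ M / 2 * ‖y - x‖ ^ 2 := by
  let γ : ℝ → E := AffineMap.lineMap x y
  have γ_mem : Set.MapsTo γ (Set.Icc 0 1) s := hs.mapsTo_lineMap hx hy
  have γ_sub (t : ℝ) : γ t - x = t • (y - x) := by
    simp only [γ, AffineMap.lineMap_apply_module', add_sub_cancel_right]
  have hasDerivWithinAt_remainder : ∀ t ∈ Set.Icc (0 : ℝ) 1,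
      HasDerivWithinAt (fun t ↦ f (γ t) - f' x (γ t)) ((f' (γ t) - f' x) (y - x))
        (Set.Icc 0 1) t := fun t ht ↦
    ((hf _ (γ_mem ht)).sub (f' x).hasFDerivWithinAt).comp_hasDerivWithinAt t
      AffineMap.hasDerivWithinAt_lineMap γ_mem
  have norm_deriv_remainder_le : ∀ t ∈ Set.Ico (0 : ℝ) 1,
      ‖(f' (γ t) - f' x) (y - x)‖ ≤ M * ‖y - x‖ ^ 2 * (t - 0) := fun t ht ↦
    calc ‖(f' (γ t) - f' x) (y - x)‖
        ≤ M * ‖γ t - x‖ * ‖y - x‖ :=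
          ContinuousLinearMap.le_of_opNorm_le _
            (hlip _ (γ_mem (Set.Ico_subset_Icc_self ht))) _
      _ = M * ‖y - x‖ ^ 2 * (t - 0) := by
          rw [γ_sub, norm_smul, Real.norm_of_nonneg ht.1]
          ring
  calc ‖f y - f x - f' x (y - x)‖
      = ‖(f (γ 1) - f' x (γ 1)) - (f (γ 0) - f' x (γ 0))‖ := by
        simp only [γ, AffineMap.lineMap_apply_one, AffineMap.lineMap_apply_zero, map_sub]
        congr 1
        abel
    _ ≤ M * ‖y - x‖ ^ 2 / 2 * (1 - 0) ^ 2 :=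
        norm_image_sub_le_of_norm_deriv_le_mul_sub zero_le_one hasDerivWithinAt_remainder
          norm_deriv_remainder_le
    _ = M / 2 * ‖y - x‖ ^ 2 := by ring

end Taylor

section LowerBound

open scoped ComplexOrder

variable {𝕜 n : Type*} [RCLike 𝕜] [Fintype n] [DecidableEq n]

theorem mul_norm_le_norm_of_mul_sq_le_re_inner {E : Type*} [SeminormedAddCommGroup E]
    [InnerProductSpace 𝕜 E] {μ : ℝ} {x y : E} (h : μ * ‖x‖ ^ 2 ≤ RCLike.re (inner 𝕜 x y)) :
    μ * ‖x‖ ≤ ‖y‖ := by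
  rcases (norm_nonneg x).eq_or_lt with hx | hx
  · simp [← hx]
  · refine le_of_mul_le_mul_left ?_ hx
    calc ‖x‖ * (μ * ‖x‖) = μ * ‖x‖ ^ 2 := by ring
      _ ≤ RCLike.re (inner 𝕜 x y) := h
      _ ≤ ‖x‖ * ‖y‖ := re_inner_le_norm x y

theorem mul_norm_le_norm_toEuclideanCLM {A : Matrix n n 𝕜} {μ : ℝ}
    (hA : (A - μ • 1).PosSemidef) (x : EuclideanSpace 𝕜 n) :
    μ * ‖x‖ ≤ ‖Matrix.toEuclideanCLM (𝕜 := 𝕜) A x‖ := by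
  have re_inner_nonneg :
      0 ≤ RCLike.re (inner 𝕜 x (Matrix.toEuclideanCLM (𝕜 := 𝕜) (A - μ • 1) x)) :=
    (Matrix.isPositive_toEuclideanLin_iff.2 hA).re_inner_nonneg_right x
  apply mul_norm_le_norm_of_mul_sq_le_re_inner (𝕜 := 𝕜)
  rw [RCLike.real_smul_eq_coe_smul (K := 𝕜) μ (1 : Matrix n n 𝕜)] at re_inner_nonneg
  simpa only [map_sub, map_smul, map_one, _root_.sub_apply, _root_.smul_apply, one_apply_eq_self,
    inner_sub_right, inner_smul_right, RCLike.re_ofReal_mul, inner_self_eq_norm_sq,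
    sub_nonneg] using re_inner_nonneg

theorem isUnit_det_of_posSemidef_sub_smul_one {A : Matrix n n 𝕜} {μ : ℝ} (hμ : 0 < μ)
    (hA : (A - μ • 1).PosSemidef) : IsUnit A.det := by
  have posDef : A.PosDef := by
    simpa only [add_sub_cancel] using (Matrix.PosDef.one.smul hμ).add_posSemidef hA
  exact posDef.det_pos.ne'.isUnit

theorem toEuclideanCLM_apply_toEuclideanCLM_inv {A : Matrix n n 𝕜} (hA : IsUnit A.det)
    (v : EuclideanSpace 𝕜 n) :
    Matrix.toEuclideanCLM (𝕜 := 𝕜) A (Matrix.toEuclideanCLM (𝕜 := 𝕜) A⁻¹ v) = v := by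
  rw [← mul_apply_eq_comp, ← map_mul, Matrix.mul_nonsing_inv _ hA, map_one,
    one_apply_eq_self]

end LowerBound

theorem exact_newton_step_bound_general {E G : Type*} [NormedAddCommGroup E] [NormedSpace ℝ E]
    [NormedAddCommGroup G] [NormedSpace ℝ G] {g : E → G} {H : E → E →L[ℝ] G} {A : E →L[ℝ] G}
    {s : Set E} {M μ : ℝ} {w wstar step : E} (hs : Convex ℝ s)
    (hg : ∀ z ∈ s, HasFDerivWithinAt g (H z) s z)
    (hlip : ∀ z ∈ s, ‖H z - H w‖ ≤ M * ‖z - w‖) (hw : w ∈ s) (hwstar : wstar ∈ s)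
    (hstar : g wstar = 0) (hμ : 0 < μ) (hA : ∀ x, μ * ‖x‖ ≤ ‖A x‖) (hstep : A step = g w) :
    ‖w - wstar - step‖ ≤
      M / (2 * μ) * ‖w - wstar‖ ^ 2 + (1 / μ) * ‖(A - H w) (w - wstar)‖ := by
  have apply_error : A (w - wstar - step) =
      (A - H w) (w - wstar) + (g wstar - g w - H w (wstar - w)) := by
    simp only [map_sub, hstep, hstar, _root_.sub_apply]
    abel
  have remainder_le : ‖g wstar - g w - H w (wstar - w)‖ ≤ M / 2 * ‖w - wstar‖ ^ 2 := by
    rw [norm_sub_rev w wstar]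
    exact norm_image_sub_sub_hasFDerivWithin_le hs hg hlip hw hwstar
  calc ‖w - wstar - step‖
      ≤ ‖A (w - wstar - step)‖ / μ := (le_div_iff₀' hμ).2 (hA _)
    _ ≤ (‖(A - H w) (w - wstar)‖ + M / 2 * ‖w - wstar‖ ^ 2) / μ := by
        rw [apply_error]
        gcongr
        exact norm_add_le_of_le le_rfl remainder_le
    _ = M / (2 * μ) * ‖w - wstar‖ ^ 2 + (1 / μ) * ‖(A - H w) (w - wstar)‖ := by
        field_simp
        ring

/-- **Error bound for the exact Newton step with an approximate Hessian**
(bound on Term 1 of inequality (4.9)).  Let `F : ℝ^d → ℝ` be twice continuously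
differentiable (with gradient `gF` and Hessian `HF`), with `M`-Lipschitz Hessian and
`∇F(w*) = 0`.  Let `A` be symmetric with `A ⪰ μ·I`, `μ > 0`.  Then for every `w`,
`‖w − w* − A⁻¹∇F(w)‖ ≤ (M/(2μ))‖w − w*‖² + (1/μ)‖(A − ∇²F(w))(w − w*)‖`. -/
theorem exact_newton_step_bound
    {d : ℕ}
    (F : EuclideanSpace ℝ (Fin d) → ℝ)
    (gF : EuclideanSpace ℝ (Fin d) → EuclideanSpace ℝ (Fin d))
    (HF : EuclideanSpace ℝ (Fin d) → Matrix (Fin d) (Fin d) ℝ)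
    (M μ : ℝ) (hμ : 0 < μ) (hM : 0 ≤ M)
    (hsmooth : ContDiff ℝ 2 F)
    (hgrad : ∀ z, HasGradientAt F (gF z) z)
    (hhess : ∀ z, HasFDerivAt gF (Matrix.toEuclideanCLM (𝕜 := ℝ) (HF z)) z)
    (hHsymm : ∀ z, (HF z).IsHermitian)
    (hlip : ∀ u z, ‖Matrix.toEuclideanCLM (𝕜 := ℝ) (HF u - HF z)‖ ≤ M * ‖u - z‖)
    (wstar : EuclideanSpace ℝ (Fin d)) (hstar : gF wstar = 0)
    (A : Matrix (Fin d) (Fin d) ℝ) (hAsymm : A.IsHermitian)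
    (hAlower : (A - μ • 1).PosSemidef) :
    ∀ w : EuclideanSpace ℝ (Fin d),
      ‖w - wstar - matVec A⁻¹ (gF w)‖ ≤
        M / (2 * μ) * ‖w - wstar‖ ^ 2 + (1 / μ) * ‖matVec (A - HF w) (w - wstar)‖ := by
  intro w
  simpa only [matVec, map_sub] using exact_newton_step_bound_general convex_univ
    (fun z _ ↦ (hhess z).hasFDerivWithinAt) (fun z _ ↦ by simpa only [map_sub] using hlip z w)
    (Set.mem_univ w) (Set.mem_univ wstar) hstar hμ (mul_norm_le_norm_toEuclideanCLM hAlower)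
    (toEuclideanCLM_apply_toEuclideanCLM_inv (isUnit_det_of_posSemidef_sub_smul_one hμ hAlower) _)
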